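/- arXiv:2203.01031 — 3 statements merged into one kernel-verified Lean document; each statement's English description precedes it below -/
import Mathlib

section
/- Let n = dim_k V and let W ⊆ V be an isotropic subspace of dimension r with ordered basis (w₁,…,w_r) and ω = ι(w₁)⋯ι(w_r). Then dim_k(Cl(q)·ω) = 2^{n−r} and dim_k(ω·Cl(q)) = 2^{n−r}. Moreover, if r < n, then dim_k((Cl(q)·ω) ∩ Cl(q)₀) = dim_k((Cl(q)·ω) ∩ Cl(q)₁) = 2^{n−r−1}. (These are the rank computations for the Clifford ideals I_k^W and I_k^{∘W} used in the proof of Lemma 2.6: each graded piece has rank 2^{rank(E)−r−1}.) -/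
open CliffordAlgebra

section helpers

variable {k V : Type*} [Field k] [AddCommGroup V] [Module k V]

/-- Homotopy lemma: if `A² = 0` and `AD + DA = 1` on a stable subspace `J`, then `A` has rank
half of the dimension of `J`. -/
lemma two_mul_finrank_map_of_homotopy {E : Type*} [AddCommGroup E] [Module k E]
    [FiniteDimensional k E] (J : Submodule k E) (A D : E →ₗ[k] E)
    (hA : ∀ x, A (A x) = 0) (hAD : ∀ x, A (D x) + D (A x) = x)
    (hAJ : ∀ x ∈ J, A x ∈ J) (hDJ : ∀ x ∈ J, D x ∈ J) :
    2 * Module.finrank k (J.map A) = Module.finrank k J := by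
  have h1 := LinearMap.finrank_range_add_finrank_ker (A.domRestrict J)
  have h2 : LinearMap.range (A.domRestrict J) = J.map A := by
    rw [LinearMap.domRestrict, LinearMap.range_comp, Submodule.range_subtype]
  have h3 : (LinearMap.ker (A.domRestrict J)).map J.subtype = J.map A := by
    ext x
    simp only [Submodule.mem_map, LinearMap.mem_ker, LinearMap.domRestrict_apply,
      Submodule.subtype_apply, Subtype.exists]
    constructor
    · rintro ⟨y, hy, hy0, rfl⟩
      refine ⟨D y, hDJ y hy, ?_⟩
      have := hAD y
      rwa [hy0, map_zero, add_zero] at this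
    · rintro ⟨y, hy, rfl⟩
      exact ⟨A y, hAJ y hy, hA y, rfl⟩
  have h4 : Module.finrank k ((LinearMap.ker (A.domRestrict J)).map J.subtype) =
      Module.finrank k (LinearMap.ker (A.domRestrict J)) :=
    (Submodule.equivMapOfInjective J.subtype J.subtype_injective _).finrank_eq.symm
  rw [h3] at h4
  rw [h2] at h1
  omega

lemma exists_dual_cons {r : ℕ} (w : Fin (r + 1) → V) (hli : LinearIndependent k w) :
    ∃ d : Module.Dual k V, d (w 0) = 1 ∧ ∀ i : Fin r, d (w i.succ) = 0 := by
  obtain ⟨d, hd⟩ := LinearMap.exists_extend ((Module.Basis.span hli).coord 0)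
  have key : ∀ i, d (w i) = (Module.Basis.span hli).coord 0 (Module.Basis.span hli i) := by
    intro i
    rw [← hd]
    simp [Module.Basis.span_apply]
  refine ⟨d, ?_, fun i => ?_⟩
  · rw [key]; simp
  · rw [key]; simp

variable (Q : QuadraticForm k V)

lemma finrank_clifford [Invertible (2 : k)] [FiniteDimensional k V] :
    Module.Finite k (CliffordAlgebra Q) ∧
    Module.finrank k (CliffordAlgebra Q) = 2 ^ Module.finrank k V := by
  have b := (Module.finBasis k V).ExteriorAlgebra.map (equivExterior Q).symm
  refine ⟨Module.Finite.of_basis b, ?_⟩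
  rw [Module.finrank_eq_card_basis b]
  simp

lemma contract_prod_mul (d : Module.Dual k V) : ∀ (l : List V) (_ : ∀ v ∈ l, d v = 0)
    (x : CliffordAlgebra Q), ∃ y, contractLeft d ((l.map (ι Q)).prod * x) = (l.map (ι Q)).prod * y
  | [], _, x => ⟨contractLeft d x, by simp⟩
  | v :: l, h, x => by
    obtain ⟨y, hy⟩ := contract_prod_mul d l (fun u hu => h u (List.mem_cons_of_mem _ hu)) x
    refine ⟨-y, ?_⟩
    rw [List.map_cons, List.prod_cons, mul_assoc, contractLeft_ι_mul, hy,
      h v List.mem_cons_self]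
    simp [mul_assoc]

lemma contract_prod (d : Module.Dual k V) : ∀ (l : List V) (_ : ∀ v ∈ l, d v = 0),
    contractLeft d ((l.map (ι Q)).prod) = 0
  | [], _ => by simp
  | v :: l, h => by
    have hy := contract_prod d l (fun u hu => h u (List.mem_cons_of_mem _ hu))
    rw [List.map_cons, List.prod_cons, contractLeft_ι_mul, hy, h v List.mem_cons_self]
    simp

lemma contract_mul (d : Module.Dual k V) (ω : CliffordAlgebra Q) (h : contractLeft d ω = 0)
    (x : CliffordAlgebra Q) : contractLeft d (x * ω) = contractLeft d x * ω := by
  induction x using CliffordAlgebra.left_induction with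
  | algebraMap a => simp [contractLeft_algebraMap_mul, h]
  | add a b ha hb => rw [add_mul, map_add, ha, hb, map_add, add_mul]
  | ι_mul a m ha =>
    rw [mul_assoc, contractLeft_ι_mul, ha, contractLeft_ι_mul, sub_mul, smul_mul_assoc, mul_assoc]

lemma involute_contract (d : Module.Dual k V) (x : CliffordAlgebra Q) :
    involute (contractLeft d x) = -contractLeft d (involute x) := by
  induction x using CliffordAlgebra.left_induction with
  | algebraMap a => simp
  | add a b ha hb => simp only [map_add, ha, hb, neg_add]
  | ι_mul a m ha =>
    simp only [contractLeft_ι_mul, map_sub, map_smul, map_mul, involute_ι, ha, neg_mul, map_neg,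
      mul_neg, neg_neg]

lemma ι_mul_prod (v : V) : ∀ (l : List V) (_ : ∀ u ∈ l, QuadraticMap.polar Q v u = 0)
    (x : CliffordAlgebra Q), ∃ y, ι Q v * ((l.map (ι Q)).prod * x) = (l.map (ι Q)).prod * y
  | [], _, x => ⟨ι Q v * x, by simp⟩
  | u :: l, h, x => by
    obtain ⟨y, hy⟩ := ι_mul_prod v l (fun u hu => h u (List.mem_cons_of_mem _ hu)) x
    refine ⟨-y, ?_⟩
    have h0 := h u List.mem_cons_self
    rw [List.map_cons, List.prod_cons, mul_assoc, ← mul_assoc, ι_mul_ι_comm, h0, map_zero,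
      zero_sub, neg_mul, mul_assoc, hy, mul_neg, mul_assoc]

lemma finrank_right [Invertible (2 : k)] [FiniteDimensional k V] :
    ∀ (r : ℕ) (w : Fin r → V) (_ : LinearIndependent k w) (_ : ∀ i, Q (w i) = 0)
      (_ : ∀ i j, QuadraticMap.polar Q (w i) (w j) = 0),
    2 ^ r * Module.finrank k
      (LinearMap.range (LinearMap.mulLeft k ((List.ofFn w).map (ι Q)).prod)) =
      2 ^ Module.finrank k V
  | 0, w, _, _, _ => by
    rw [List.ofFn_zero, List.map_nil, List.prod_nil, LinearMap.mulLeft_one, LinearMap.range_id,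
      finrank_top, (finrank_clifford Q).2, pow_zero, one_mul]
  | r + 1, w, hli, hq, hp => by
    have := (finrank_clifford Q).1
    have ih := finrank_right r (fun i => w i.succ)
      (hli.comp _ (Fin.succ_injective _)) (fun i => hq _) (fun i j => hp _ _)
    obtain ⟨d, hd0, hd⟩ := exists_dual_cons w hli
    rw [← ih, pow_succ, mul_assoc]
    congr 1
    rw [← two_mul_finrank_map_of_homotopy
      (LinearMap.range (LinearMap.mulLeft k ((List.ofFn fun i => w i.succ).map (ι Q)).prod))
      (LinearMap.mulLeft k (ι Q (w 0))) (contractLeft d)]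
    · rw [List.ofFn_succ, List.map_cons, List.prod_cons, LinearMap.mulLeft_mul,
        LinearMap.range_comp]
    · intro x
      simp [← mul_assoc, hq]
    · intro x
      simp [contractLeft_ι_mul, hd0]
    · rintro _ ⟨x, rfl⟩
      obtain ⟨y, hy⟩ := ι_mul_prod Q (w 0) (List.ofFn fun i => w i.succ)
        (by simpa [List.mem_ofFn] using fun i => hp 0 (Fin.succ i)) x
      exact ⟨y, hy.symm⟩
    · rintro _ ⟨x, rfl⟩
      obtain ⟨y, hy⟩ := contract_prod_mul Q d (List.ofFn fun i => w i.succ)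
        (by simpa [List.mem_ofFn] using hd) x
      exact ⟨y, hy.symm⟩

lemma finrank_left [Invertible (2 : k)] [FiniteDimensional k V]
    (r : ℕ) (w : Fin r → V) (hli : LinearIndependent k w) (hq : ∀ i, Q (w i) = 0)
      (hp : ∀ i j, QuadraticMap.polar Q (w i) (w j) = 0) :
    2 ^ r * Module.finrank k
      (LinearMap.range (LinearMap.mulRight k ((List.ofFn w).map (ι Q)).prod)) =
      2 ^ Module.finrank k V := by
  have h := finrank_right Q r (fun i => w i.rev) (hli.comp _ Fin.rev_injective)
    (fun i => hq _) (fun i j => hp _ _)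
  rw [← h]
  congr 1
  have hrev : ((List.ofFn fun i => w i.rev).map (ι Q)).prod =
      reverse (((List.ofFn w).map (ι Q)).prod) := by
    rw [reverse_prod_map_ι, ← List.map_reverse]
    congr 2
    apply List.ext_getElem <;> simp [Fin.rev]
    intros; congr 2; omega
  rw [hrev]
  have hmap : LinearMap.range (LinearMap.mulLeft k (reverse (((List.ofFn w).map (ι Q)).prod))) =
      (LinearMap.range (LinearMap.mulRight k ((List.ofFn w).map (ι Q)).prod)).map
        (LinearEquiv.ofInvolutive (reverse (Q := Q)) reverse_involutive).toLinearMap := by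
    ext y
    constructor
    · rintro ⟨x, rfl⟩
      exact ⟨reverse x * ((List.ofFn w).map (ι Q)).prod, ⟨reverse x, rfl⟩, by simp⟩
    · rintro ⟨_, ⟨x, rfl⟩, rfl⟩
      exact ⟨reverse x, by simp⟩
  rw [hmap]
  exact (LinearEquiv.finrank_map_eq _ _).symm

lemma mem_even_iff [Invertible (2 : k)] (x : CliffordAlgebra Q) :
    (x ∈ evenOdd Q 0 ↔ involute x = x) ∧ (x ∈ evenOdd Q 1 ↔ involute x = -x) := by
  have two : ∀ y : CliffordAlgebra Q, y = -y → y = 0 := by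
    intro y hy
    have h2 : (2 : k) • y = 0 := by
      rw [two_smul]; nth_rewrite 2 [hy]; exact add_neg_cancel y
    exact (smul_eq_zero.mp h2).resolve_left (Invertible.ne_zero 2)
  have hx : x ∈ evenOdd Q 0 ⊔ evenOdd Q 1 := by
    rw [(evenOdd_isCompl Q).sup_eq_top]; trivial
  obtain ⟨a, ha, b, hb, rfl⟩ := Submodule.mem_sup.mp hx
  have ea := involute_eq_of_mem_even ha
  have eb := involute_eq_of_mem_odd hb
  refine ⟨⟨involute_eq_of_mem_even, fun h => ?_⟩, ⟨involute_eq_of_mem_odd, fun h => ?_⟩⟩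
  · rw [map_add, ea, eb] at h
    have : b = 0 := two b (add_left_cancel h).symm
    rw [this, add_zero]; exact ha
  · rw [map_add, ea, eb, neg_add] at h
    have : a = 0 := two a (add_right_cancel h)
    rw [this, zero_add]; exact hb

lemma finrank_graded [Invertible (2 : k)] [FiniteDimensional k V]
    (L : Submodule k (CliffordAlgebra Q)) (T : CliffordAlgebra Q →ₗ[k] CliffordAlgebra Q)
    (hT : ∀ x, T (T x) = x) (hTσ : ∀ x, involute (T x) = -T (involute x))
    (hTL : ∀ x ∈ L, T x ∈ L) (hσL : ∀ x ∈ L, involute x ∈ L) :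
    2 * Module.finrank k ↥(L ⊓ evenOdd Q 0) = Module.finrank k L ∧
    2 * Module.finrank k ↥(L ⊓ evenOdd Q 1) = Module.finrank k L := by
  have := (finrank_clifford Q).1
  have hTinj : Function.Injective T := Function.LeftInverse.injective hT
  have hsum := Submodule.finrank_sup_add_finrank_inf_eq (L ⊓ evenOdd Q 0) (L ⊓ evenOdd Q 1)
  have hinf : (L ⊓ evenOdd Q 0) ⊓ (L ⊓ evenOdd Q 1) = ⊥ :=
    ((evenOdd_isCompl Q).disjoint.mono inf_le_right inf_le_right).eq_bot
  have hsup : (L ⊓ evenOdd Q 0) ⊔ (L ⊓ evenOdd Q 1) = L := by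
    refine le_antisymm (sup_le inf_le_left inf_le_left) fun x hx => ?_
    refine Submodule.mem_sup.mpr ⟨(⅟2 : k) • (x + involute x), ⟨?_, ?_⟩,
      (⅟2 : k) • (x - involute x), ⟨?_, ?_⟩, ?_⟩
    · exact L.smul_mem _ (L.add_mem hx (hσL x hx))
    · apply ((mem_even_iff Q _).1).mpr
      simp [add_comm]
    · exact L.smul_mem _ (L.sub_mem hx (hσL x hx))
    · apply ((mem_even_iff Q _).2).mpr
      rw [map_smul, map_sub, involute_involute, ← smul_neg, neg_sub]
    · rw [← smul_add, add_add_sub_cancel, ← two_smul k x, smul_smul, invOf_mul_self, one_smul]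
  rw [hinf, hsup, finrank_bot, add_zero] at hsum
  have h01 : Module.finrank k ↥(L ⊓ evenOdd Q 0) ≤ Module.finrank k ↥(L ⊓ evenOdd Q 1) := by
    rw [(Submodule.equivMapOfInjective T hTinj _).finrank_eq]
    refine Submodule.finrank_mono ?_
    rintro _ ⟨x, ⟨hx, hx0⟩, rfl⟩
    refine ⟨hTL x hx, ((mem_even_iff Q _).2).mpr ?_⟩
    rw [hTσ, ((mem_even_iff Q _).1).mp hx0]
  have h10 : Module.finrank k ↥(L ⊓ evenOdd Q 1) ≤ Module.finrank k ↥(L ⊓ evenOdd Q 0) := by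
    rw [(Submodule.equivMapOfInjective T hTinj _).finrank_eq]
    refine Submodule.finrank_mono ?_
    rintro _ ⟨x, ⟨hx, hx0⟩, rfl⟩
    refine ⟨hTL x hx, ((mem_even_iff Q _).1).mpr ?_⟩
    rw [hTσ, ((mem_even_iff Q _).2).mp hx0, map_neg, neg_neg]
  omega

end helpers

/-- For an isotropic subspace `W` of dimension `r` with ordered basis
`w₁, …, w_r` and `ω = ι w₁ ⋯ ι w_r`, the left and right Clifford ideals `Cl(q)·ω` and
`ω·Cl(q)` have dimension `2^(n−r)` where `n = dim V`; and if `r < n`, each of the two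
graded pieces `(Cl(q)·ω) ∩ Cl(q)₀` and `(Cl(q)·ω) ∩ Cl(q)₁` has dimension `2^(n−r−1)`. -/
theorem clifford_ideal_finrank
    {k V : Type*} [Field k] [Invertible (2 : k)]
    [AddCommGroup V] [Module k V] [FiniteDimensional k V]
    (Q : QuadraticForm k V) (W : Submodule k V)
    (hiso : ∀ u ∈ W, Q u = 0)
    (r : ℕ) (w : Fin r → V)
    (hli : LinearIndependent k w)
    (hspan : Submodule.span k (Set.range w) = W)
    (ω : CliffordAlgebra Q)
    (hω : ω = (List.ofFn fun i => ι Q (w i)).prod) :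
    Module.finrank k ↥(Submodule.span k {y | ∃ x : CliffordAlgebra Q, y = x * ω}) =
      2 ^ (Module.finrank k V - r) ∧
    Module.finrank k ↥(Submodule.span k {y | ∃ x : CliffordAlgebra Q, y = ω * x}) =
      2 ^ (Module.finrank k V - r) ∧
    (r < Module.finrank k V →
      Module.finrank k
          ↥(Submodule.span k {y | ∃ x : CliffordAlgebra Q, y = x * ω} ⊓ evenOdd Q 0) =
        2 ^ (Module.finrank k V - r - 1) ∧
      Module.finrank k
          ↥(Submodule.span k {y | ∃ x : CliffordAlgebra Q, y = x * ω} ⊓ evenOdd Q 1) =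
        2 ^ (Module.finrank k V - r - 1)) := by
  have hspan_mem : ∀ i, w i ∈ W := fun i => hspan ▸ Submodule.subset_span ⟨i, rfl⟩
  have hq : ∀ i, Q (w i) = 0 := fun i => hiso _ (hspan_mem i)
  have hp : ∀ i j, QuadraticMap.polar Q (w i) (w j) = 0 := fun i j => by
    simp [QuadraticMap.polar, hq, hiso _ (W.add_mem (hspan_mem i) (hspan_mem j))]
  have hω' : ω = ((List.ofFn w).map (ι Q)).prod := by
    rw [hω, List.map_ofFn]; rfl
  have hL : Submodule.span k {y | ∃ x : CliffordAlgebra Q, y = x * ω} =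
      LinearMap.range (LinearMap.mulRight k ω) := by
    rw [← Submodule.span_eq (LinearMap.range (LinearMap.mulRight k ω))]
    congr 1
    ext y
    simp [eq_comm]
  have hR : Submodule.span k {y | ∃ x : CliffordAlgebra Q, y = ω * x} =
      LinearMap.range (LinearMap.mulLeft k ω) := by
    rw [← Submodule.span_eq (LinearMap.range (LinearMap.mulLeft k ω))]
    congr 1
    ext y
    simp [eq_comm]
  have hrn : r ≤ Module.finrank k V := by simpa using hli.fintype_card_le_finrank
  have hpow : 2 ^ Module.finrank k V = 2 ^ r * 2 ^ (Module.finrank k V - r) := by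
    rw [← pow_add, Nat.add_sub_cancel' hrn]
  have h2 : 0 < 2 ^ r := by positivity
  have dL := finrank_left Q r w hli hq hp
  have dR := finrank_right Q r w hli hq hp
  rw [← hω', hpow] at dL dR
  have dL := Nat.eq_of_mul_eq_mul_left h2 dL
  have dR := Nat.eq_of_mul_eq_mul_left h2 dR
  rw [hL, hR]
  refine ⟨dL, dR, fun hlt => ?_⟩
  have hWtop : W ≠ ⊤ := by
    intro h
    have h3 := finrank_span_eq_card hli
    rw [hspan, h, finrank_top, Fintype.card_fin] at h3
    omega
  obtain ⟨u, -, hu⟩ := SetLike.exists_of_lt (lt_top_iff_ne_top.mpr hWtop)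
  obtain ⟨d, hdu, hdW⟩ := Submodule.exists_dual_map_eq_bot_of_notMem hu inferInstance
  obtain ⟨e, heu, heW⟩ : ∃ e : Module.Dual k V, e u = 1 ∧ ∀ v ∈ W, e v = 0 := by
    refine ⟨(d u)⁻¹ • d, by simp [hdu], fun v hv => ?_⟩
    have : d v ∈ W.map d := ⟨v, hv, rfl⟩
    rw [hdW, Submodule.mem_bot] at this
    simp [this]
  have heω : contractLeft e ω = 0 := by
    rw [hω']
    exact contract_prod Q e _ (by simpa [List.mem_ofFn] using fun i => heW _ (hspan_mem i))
  have hg := finrank_graded Q (LinearMap.range (LinearMap.mulRight k ω))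
    (LinearMap.mulLeft k (ι Q u) + (1 - Q u) • contractLeft e)
    (by
      intro x
      have hc : Q u + (1 - Q u) = 1 := by ring
      generalize (1 - Q u) = c at hc
      simp only [LinearMap.add_apply, LinearMap.smul_apply, LinearMap.mulLeft_apply, map_add,
        map_smul, contractLeft_ι_mul, contractLeft_contractLeft, heu, mul_add, ← mul_assoc,
        ι_sq_scalar, mul_smul_comm, smul_zero, add_zero, one_smul, smul_sub,
        ← Algebra.smul_def]
      conv_rhs => rw [← one_smul k x, ← hc, add_smul]
      abel)
    (by
      intro x
      simp only [LinearMap.add_apply, LinearMap.smul_apply, LinearMap.mulLeft_apply, map_add,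
        map_smul, map_mul, involute_ι, involute_contract, smul_neg, neg_mul, neg_add])
    (by
      rintro _ ⟨x, rfl⟩
      refine ⟨ι Q u * x + (1 - Q u) • contractLeft e x, ?_⟩
      simp [contract_mul Q e ω heω, add_mul, mul_assoc])
    (by
      rintro _ ⟨x, rfl⟩
      refine ⟨(-1 : k) ^ r • involute x, ?_⟩
      have hinv : involute ω = (-1 : k) ^ r • ω := by
        rw [hω', involute_prod_map_ι, List.length_ofFn]
      simp [hinv])
  rw [dL] at hg
  obtain ⟨m, hm⟩ : ∃ m, Module.finrank k V - r = m + 1 := ⟨Module.finrank k V - r - 1, by omega⟩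
  rw [hm, pow_succ] at hg
  rw [hm, Nat.add_sub_cancel]
  omega
end

section
/- Let n = dim_k V, let W ⊆ V be an isotropic subspace of dimension r with ordered basis (w₁,…,w_r), and set ω = ι(w₁)⋯ι(w_r). Let λ : Cl(q) → Λⁿ V be the composition of the canonical filtered k-linear isomorphism Cl(q) ≅ Λ•V (which exists since 2 is invertible in k and induces the identity on associated graded pieces) with the projection onto the top exterior power ΛⁿV. Then the k-linear map Φ : Cl(q) → Hom_k(Cl(q)·ω, ΛⁿV) defined by Φ(ξ)(y) = λ(ξ·y) is surjective, and its kernel is exactly {ξ ∈ Cl(q) : ω·ξ = 0}; consequently Φ induces a k-linear isomorphism Cl(q)/{ξ ∈ Cl(q) : ω·ξ = 0} ≅ Hom_k(Cl(q)·ω, ΛⁿV). (This is the fiberwise, ungraded form of the duality of Lemma 2.6: (I_k^W)^∨ ≅ I^{∘W}_{r−k} ⊗ det(W)^∨ ⊗ det(E)^∨ ⊗ L^m up to twist.) -/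
open CliffordAlgebra

namespace CliffDual

variable {k V : Type*} [Field k] [AddCommGroup V] [Module k V]

theorem gen_surj {A T : Type*} [AddCommGroup A] [Module k A] [AddCommGroup T] [Module k T]
    [FiniteDimensional k A] (hT : Module.finrank k T = 1)
    (f : A →ₗ[k] A →ₗ[k] T) (hf : Function.Injective f) : Function.Surjective f := by
  have : FiniteDimensional k T := Module.finite_of_finrank_eq_succ hT
  refine (LinearMap.injective_iff_surjective_of_finrank_eq_finrank ?_).mp hf
  rw [Module.finrank_linearMap, hT, mul_one]

theorem gen_quot {A L T : Type*} [AddCommGroup A] [Module k A] [AddCommGroup L] [Module k L]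
    [AddCommGroup T] [Module k T] (f : A →ₗ[k] L →ₗ[k] T) (hf : ∀ g, ∃ x, f x = g)
    (N : Submodule k A) (hN : N = LinearMap.ker f) : Nonempty ((A ⧸ N) ≃ₗ[k] (L →ₗ[k] T)) :=
  ⟨(Submodule.quotEquivOfEq _ _ hN).trans (f.quotKerEquivOfSurjective hf)⟩

/-- Projection of the exterior algebra to degree `n`. -/
noncomputable def proj (k V : Type*) [Field k] [AddCommGroup V] [Module k V] (n : ℕ) :
    ExteriorAlgebra k V →ₗ[k] ↥(⋀[k]^n V) :=
  DirectSum.component k ℕ (fun i : ℕ => ⋀[k]^i V) n ∘ₗ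
    (DirectSum.decomposeLinearEquiv (fun i : ℕ => ⋀[k]^i V)).toLinearMap

theorem proj_apply (n : ℕ) (x : ExteriorAlgebra k V) :
    proj k V n x = DirectSum.decompose (fun i : ℕ => ⋀[k]^i V) x n := rfl

theorem proj_of_mem {n : ℕ} {x : ExteriorAlgebra k V} (hx : x ∈ ⋀[k]^n V) :
    (proj k V n x : ExteriorAlgebra k V) = x := by
  rw [proj_apply]
  exact DirectSum.decompose_of_mem_same _ hx

theorem proj_of_mem_ne {n m : ℕ} {x : ExteriorAlgebra k V} (hx : x ∈ ⋀[k]^m V) (h : m ≠ n) :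
    proj k V n x = 0 := by
  apply Subtype.ext
  rw [proj_apply]
  exact DirectSum.decompose_of_mem_ne _ hx h

theorem contract_mem (d : Module.Dual k V) {i : ℕ} {x : ExteriorAlgebra k V}
    (hx : x ∈ ⋀[k]^i V) :
    (contractLeft (Q := (0 : QuadraticForm k V)) d x = 0) ∨
      ∃ j, i = j + 1 ∧ contractLeft (Q := (0 : QuadraticForm k V)) d x ∈ ⋀[k]^j V := by
  cases i with
  | zero =>
    left
    have hx' : x ∈ (1 : Submodule k (ExteriorAlgebra k V)) := by simpa using hx
    obtain ⟨r, rfl⟩ := Submodule.mem_one.mp hx'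
    exact contractLeft_algebraMap _ _ r
  | succ i =>
    right
    refine ⟨i, rfl, ?_⟩
    induction i generalizing x with
    | zero =>
      have hx' : x ∈ LinearMap.range (ExteriorAlgebra.ι k : V →ₗ[k] _) := by simpa using hx
      obtain ⟨v, rfl⟩ := hx'
      have : contractLeft (Q := (0 : QuadraticForm k V)) d (ExteriorAlgebra.ι k v)
          = algebraMap k _ (d v) := contractLeft_ι _ _ v
      rw [this]
      simp
    | succ i ih =>
      change x ∈ LinearMap.range (ExteriorAlgebra.ι k : V →ₗ[k] _) ^ (i + 1 + 1) at hx
      rw [pow_succ'] at hx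
      induction hx using Submodule.mul_induction_on' with
      | mem_mul_mem m hm y hy =>
        obtain ⟨v, rfl⟩ := hm
        have : contractLeft (Q := (0 : QuadraticForm k V)) d (ExteriorAlgebra.ι k v * y)
          = d v • y - ExteriorAlgebra.ι k v * contractLeft (Q := (0 : QuadraticForm k V)) d y :=
            contractLeft_ι_mul d v y
        rw [this]
        refine Submodule.sub_mem _ (Submodule.smul_mem _ _ hy) ?_
        change _ ∈ LinearMap.range (ExteriorAlgebra.ι k : V →ₗ[k] _) ^ (i + 1)
        rw [pow_succ']
        exact Submodule.mul_mem_mul ⟨v, rfl⟩ (ih hy)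
      | add x _ y _ hx hy =>
        rw [map_add]
        exact Submodule.add_mem _ hx hy

theorem contract_mul (Q : QuadraticForm k V) (d : Module.Dual k V) (x y : CliffordAlgebra Q) :
    contractLeft d (x * y) = contractLeft d x * y + involute x * contractLeft d y := by
  induction x using CliffordAlgebra.left_induction with
  | algebraMap r => simp [contractLeft_algebraMap_mul]
  | add a b ha hb => simp only [add_mul, map_add, ha, hb]; abel
  | ι_mul x v hx =>
    rw [mul_assoc, contractLeft_ι_mul, hx, contractLeft_ι_mul, map_mul, involute_ι]
    simp only [mul_add, sub_mul, smul_mul_assoc, neg_mul, mul_assoc]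
    abel

theorem ι_mul_sub (Q : QuadraticForm k V) (v : V) (x : CliffordAlgebra Q) :
    ι Q v * x = involute x * ι Q v + contractLeft (Q.polarBilin v) x := by
  induction x using CliffordAlgebra.left_induction with
  | algebraMap r => simp [Algebra.commutes]
  | add a b ha hb => simp only [add_mul, mul_add, map_add, ha, hb]; abel
  | ι_mul x u hx =>
    rw [contractLeft_ι_mul, map_mul, involute_ι, ← mul_assoc, ι_mul_ι_comm, sub_mul, mul_assoc,
      hx, ← Algebra.smul_def]
    simp only [mul_add, neg_mul, mul_assoc, QuadraticMap.polarBilin_apply_apply]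
    abel

variable [FiniteDimensional k V]

theorem exteriorPower_eq_zero {i : ℕ} (hi : Module.finrank k V < i) {x : ExteriorAlgebra k V}
    (hx : x ∈ ⋀[k]^i V) : x = 0 := by
  have h : Module.finrank k (⋀[k]^i V) = 0 := by
    rw [exteriorPower.finrank_eq, Nat.choose_eq_zero_of_lt hi]
  have := Module.finrank_zero_iff.mp h
  exact congrArg Subtype.val (Subsingleton.elim (⟨x, hx⟩ : ⋀[k]^i V) 0)

theorem proj_contract (d : Module.Dual k V) (x : ExteriorAlgebra k V) :
    proj k V (Module.finrank k V) (contractLeft (Q := (0 : QuadraticForm k V)) d x) = 0 := by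
  induction x using DirectSum.Decomposition.inductionOn (fun i : ℕ => ⋀[k]^i V) with
  | zero => 
    rw [map_zero]
    exact map_zero _
  | @homogeneous i m =>
    rcases contract_mem d m.2 with h | ⟨j, hj, h⟩
    · rw [h]; exact map_zero _
    · by_cases hlt : Module.finrank k V < i
      · rw [exteriorPower_eq_zero hlt m.2, map_zero]
        exact map_zero _
      · exact proj_of_mem_ne h (by omega)
  | add x y hx hy =>
    rw [map_add]
    exact (map_add _ _ _).trans (by rw [hx, hy, add_zero])

theorem exterior_nondeg (x : ExteriorAlgebra k V)
    (h : ∀ y, proj k V (Module.finrank k V) (y * x) = 0) : x = 0 := by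
  classical
  let b := Module.finBasis k V
  let e := b.ExteriorAlgebra
  have hdeg : ∀ s : Finset (Fin (Module.finrank k V)), e s ∈ ⋀[k]^s.card V := by
    intro s
    have := ExteriorAlgebra.basis_eq_coe_basis b (⟨s, rfl⟩ : Set.powersetCard _ s.card)
    change b.ExteriorAlgebra s ∈ _
    rw [show b.ExteriorAlgebra s = _ from this]
    exact Subtype.property _
  apply e.repr.injective
  ext s
  rw [map_zero, Finsupp.zero_apply]
  have hx := h (e sᶜ)
  rw [← e.sum_repr x, Finset.mul_sum, map_sum, Finset.sum_eq_single s] at hx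
  · rw [mul_smul_comm, map_smul] at hx
    refine (smul_eq_zero.mp hx).resolve_right fun h0 => ?_
    have hd : Disjoint sᶜ s := disjoint_compl_left
    have hm : e sᶜ * e s ∈ ⋀[k]^(Module.finrank k V) V := by
      have := SetLike.mul_mem_graded (hdeg sᶜ) (hdeg s)
      rwa [Finset.card_compl_add_card, Fintype.card_fin] at this
    have h1 : e sᶜ * e s = 0 := by
      rw [← proj_of_mem hm, h0]; rfl
    have h2 := ExteriorAlgebra.basis_mul_of_disjoint b
      (⟨sᶜ, rfl⟩ : Set.powersetCard _ sᶜ.card) (⟨s, rfl⟩ : Set.powersetCard _ s.card) hd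
    have h3 := h2.symm.trans h1
    rw [smul_eq_zero_iff_eq] at h3
    exact b.ExteriorAlgebra.ne_zero _ h3
  · intro t _ hts
    rw [mul_smul_comm, map_smul]
    by_cases hd : Disjoint sᶜ t
    · have hsub : t ⊆ s := by
        intro a ha
        by_contra hs
        exact Finset.disjoint_left.mp hd (Finset.mem_compl.mpr hs) ha
      have hlt : t.card < s.card := Finset.card_lt_card (hsub.ssubset_of_ne hts)
      have h4 := SetLike.mul_mem_graded (hdeg sᶜ) (hdeg t)
      have h5 := Finset.card_compl_add_card s
      rw [Fintype.card_fin] at h5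
      rw [proj_of_mem_ne h4 (by omega), smul_zero]
    · have h2 := ExteriorAlgebra.basis_mul_of_not_disjoint b
        (⟨sᶜ, rfl⟩ : Set.powersetCard _ sᶜ.card) (⟨t, rfl⟩ : Set.powersetCard _ t.card) hd
      rw [show e sᶜ * e t = 0 from h2, map_zero, smul_zero]
  · simp

section
variable [Invertible (2 : k)] (Q : QuadraticForm k V)

/-- The map `λ`. -/
noncomputable def lam : CliffordAlgebra Q →ₗ[k] ↥(⋀[k]^(Module.finrank k V) V) :=
  proj k V (Module.finrank k V) ∘ₗ (equivExterior Q).toLinearMap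

theorem lam_contract (d : Module.Dual k V) (x : CliffordAlgebra Q) :
    lam Q (contractLeft d x) = 0 := by
  have : equivExterior Q (contractLeft d x) =
      contractLeft (Q := (0 : QuadraticForm k V)) d (equivExterior Q x) :=
    changeForm_contractLeft changeForm.associated_neg_proof d x
  change proj k V _ (equivExterior Q (contractLeft d x)) = 0
  rw [this]
  exact proj_contract d _

theorem lam_ι_mul (v : V) (x : CliffordAlgebra Q) :
    lam Q (ι Q v * x) = lam Q (involute x * ι Q v) := by
  rw [ι_mul_sub, map_add, lam_contract, add_zero]

theorem left_nondeg (x : CliffordAlgebra Q) (h : ∀ y, lam Q (y * x) = 0) : x = 0 := by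
  have hc : ∀ (d : Module.Dual k V) (x : CliffordAlgebra Q), (∀ y, lam Q (y * x) = 0) →
      ∀ y, lam Q (y * contractLeft d x) = 0 := by
    intro d x hx y
    have h1 := lam_contract Q d (involute y * x)
    rw [contract_mul, map_add, hx, zero_add, involute_involute] at h1
    exact h1
  have key : ∀ (Y : ExteriorAlgebra k V) (x : CliffordAlgebra Q), (∀ y, lam Q (y * x) = 0) →
      ∃ x' : CliffordAlgebra Q, (∀ y, lam Q (y * x') = 0) ∧
        equivExterior Q x' = Y * equivExterior Q x := by
    intro Y
    induction Y using CliffordAlgebra.left_induction with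
    | algebraMap r =>
      intro x hx
      refine ⟨r • x, fun y => by rw [mul_smul_comm, map_smul, hx, smul_zero], ?_⟩
      rw [map_smul, Algebra.smul_def]
    | add a b ha hb =>
      intro x hx
      obtain ⟨x1, h1, e1⟩ := ha x hx
      obtain ⟨x2, h2, e2⟩ := hb x hx
      refine ⟨x1 + x2, fun y => by rw [mul_add, map_add, h1, h2, add_zero], ?_⟩
      rw [map_add, e1, e2]
      exact (add_mul _ _ _).symm
    | ι_mul Y v hY =>
      intro x hx
      obtain ⟨x1, h1, e1⟩ := hY x hx
      refine ⟨ι Q v * x1 + contractLeft (QuadraticMap.associated (R := k) (-Q) v) x1,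
        fun y => ?_, ?_⟩
      · rw [mul_add, map_add, hc _ _ h1, ← mul_assoc, h1, add_zero]
      · have h2 : equivExterior Q (ι Q v * x1) =
          ι (0 : QuadraticForm k V) v * equivExterior Q x1 -
            contractLeft (Q := (0 : QuadraticForm k V))
              (QuadraticMap.associated (R := k) (-Q) v) (equivExterior Q x1) :=
          changeForm_ι_mul changeForm.associated_neg_proof v x1
        have h3 : equivExterior Q
            (contractLeft (QuadraticMap.associated (R := k) (-Q) v) x1) =
          contractLeft (Q := (0 : QuadraticForm k V))
            (QuadraticMap.associated (R := k) (-Q) v) (equivExterior Q x1) :=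
          changeForm_contractLeft changeForm.associated_neg_proof _ x1
        rw [map_add, h2, h3, e1]
        refine (sub_add_cancel _ _).trans ?_
        exact (mul_assoc _ _ _).symm
  apply (equivExterior Q).injective
  rw [map_zero]
  apply exterior_nondeg
  intro Y
  obtain ⟨x', h', e'⟩ := key Y x h
  rw [← e']
  have := h' 1
  rwa [one_mul] at this

theorem finite_clifford : FiniteDimensional k (CliffordAlgebra Q) := by
  have : FiniteDimensional k (ExteriorAlgebra k V) :=
    Module.Finite.of_basis (Module.finBasis k V).ExteriorAlgebra
  exact Module.Finite.equiv (equivExterior Q).symm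

theorem finrank_top : Module.finrank k (⋀[k]^(Module.finrank k V) V) = 1 := by
  rw [exteriorPower.finrank_eq, Nat.choose_self]

/-- The map `ξ ↦ (y ↦ λ (ξ y))`. -/
noncomputable def phi :
    CliffordAlgebra Q →ₗ[k] CliffordAlgebra Q →ₗ[k] ↥(⋀[k]^(Module.finrank k V) V) :=
  (LinearMap.mul k (CliffordAlgebra Q)).compr₂ (lam Q)

theorem phi_apply (x y : CliffordAlgebra Q) : phi Q x y = lam Q (x * y) := rfl

theorem surj_of_inj
    (f : CliffordAlgebra Q →ₗ[k] CliffordAlgebra Q →ₗ[k] ↥(⋀[k]^(Module.finrank k V) V))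
    (hf : Function.Injective f) : Function.Surjective f := by
  have := finite_clifford Q
  exact gen_surj finrank_top f hf

theorem right_nondeg (x : CliffordAlgebra Q) (h : ∀ y, lam Q (x * y) = 0) : x = 0 := by
  have hsurj : Function.Surjective (phi Q).flip := by
    apply surj_of_inj
    rw [injective_iff_map_eq_zero]
    intro a ha
    exact left_nondeg Q a fun y => LinearMap.congr_fun ha y
  have hnt : Nontrivial (⋀[k]^(Module.finrank k V) V) :=
    Module.nontrivial_of_finrank_pos (R := k) (by rw [finrank_top]; exact one_pos)
  obtain ⟨t, ht⟩ := exists_ne (0 : ⋀[k]^(Module.finrank k V) V)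
  by_contra hx
  obtain ⟨g, hg⟩ : ∃ g : Module.Dual k (CliffordAlgebra Q), g x ≠ 0 := by
    by_contra! hall
    exact hx ((Module.forall_dual_apply_eq_zero_iff k x).mp hall)
  obtain ⟨y, hy⟩ := hsurj (g.smulRight t)
  have h1 := LinearMap.congr_fun hy x
  rw [LinearMap.flip_apply, phi_apply, h, LinearMap.smulRight_apply] at h1
  exact smul_ne_zero hg ht h1.symm

theorem phi_surjective : Function.Surjective (phi Q) := by
  apply surj_of_inj
  rw [injective_iff_map_eq_zero]
  intro a ha
  exact right_nondeg Q a fun y => LinearMap.congr_fun ha y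

theorem lam_prod_mul (l : List V) (x : CliffordAlgebra Q) :
    lam Q ((l.map (ι Q)).prod * x) =
      lam Q (((involute : CliffordAlgebra Q →ₐ[k] _) ^ l.length) x * (l.map (ι Q)).prod) := by
  induction l generalizing x with
  | nil => simp
  | cons v l ih =>
    have hι : ∀ n : ℕ, ((involute : CliffordAlgebra Q →ₐ[k] _) ^ n) (ι Q v)
        = (-1 : k) ^ n • ι Q v := by
      intro n
      induction n with
      | zero => simp
      | succ n ihn => rw [pow_succ', AlgHom.mul_apply, ihn, map_smul, involute_ι, pow_succ]; simp
    have hinv : involute (l.map (ι Q)).prod = (-1 : k) ^ l.length • (l.map (ι Q)).prod :=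
      involute_prod_map_ι l
    have hs : ((-1 : k) ^ l.length * (-1 : k) ^ l.length) = 1 := by
      rw [← mul_pow]; simp
    rw [List.map_cons, List.prod_cons, mul_assoc, lam_ι_mul, map_mul involute, hinv, smul_mul_assoc,
      smul_mul_assoc, map_smul, mul_assoc, ih, map_mul (_ ^ _), hι, mul_smul_comm, smul_mul_assoc,
      map_smul, smul_smul, hs, one_smul, List.length_cons, pow_succ, AlgHom.mul_apply, mul_assoc]

theorem involute_pow_involutive (n : ℕ) (x : CliffordAlgebra Q) :
    ((involute : CliffordAlgebra Q →ₐ[k] _) ^ n)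
      (((involute : CliffordAlgebra Q →ₐ[k] _) ^ n) x) = x := by
  have h : (involute : CliffordAlgebra Q →ₐ[k] _) * involute = 1 :=
    AlgHom.ext fun y => involute_involute y
  rw [← AlgHom.mul_apply, ← (Commute.refl _).mul_pow, h, one_pow, AlgHom.one_apply]

theorem involute_pow_prod (l : List V) (n : ℕ) :
    ∃ u : k, u ≠ 0 ∧ ((involute : CliffordAlgebra Q →ₐ[k] _) ^ n) (l.map (ι Q)).prod =
      u • (l.map (ι Q)).prod := by
  induction n with
  | zero => exact ⟨1, one_ne_zero, by simp⟩
  | succ n ih =>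
    obtain ⟨u, hu, h⟩ := ih
    refine ⟨u * (-1) ^ l.length, mul_ne_zero hu (pow_ne_zero _ (by simp)), ?_⟩
    rw [pow_succ', AlgHom.mul_apply, h, map_smul, involute_prod_map_ι, smul_smul]

theorem ker_iff (l : List V) (ξ : CliffordAlgebra Q) :
    (∀ x, lam Q (ξ * (x * (l.map (ι Q)).prod)) = 0) ↔ (l.map (ι Q)).prod * ξ = 0 := by
  set σ := (involute : CliffordAlgebra Q →ₐ[k] _) ^ l.length with hσ
  have hσσ : ∀ x, σ (σ x) = x := involute_pow_involutive Q l.length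
  have key : ∀ x, lam Q (ξ * (x * (l.map (ι Q)).prod)) =
      lam Q (((l.map (ι Q)).prod * σ ξ) * σ x) := by
    intro x
    rw [mul_assoc, ← map_mul, lam_prod_mul, ← hσ, hσσ, mul_assoc]
  obtain ⟨u, hu, hω⟩ := involute_pow_prod Q l l.length
  rw [← hσ] at hω
  have h2 : σ ((l.map (ι Q)).prod * σ ξ) = u • ((l.map (ι Q)).prod * ξ) := by
    rw [map_mul, hσσ, hω, smul_mul_assoc]
  constructor
  · intro h
    have h1 : (l.map (ι Q)).prod * σ ξ = 0 := by
      apply right_nondeg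
      intro y
      rw [← hσσ y, ← key, h]
    rw [h1, map_zero] at h2
    exact (smul_eq_zero.mp h2.symm).resolve_left hu
  · intro h x
    rw [h, smul_zero] at h2
    rw [key, ← hσσ ((l.map (ι Q)).prod * σ ξ), h2, map_zero, zero_mul, map_zero]
end

end CliffDual

/-- Let `n = dim V`, `W` an isotropic subspace with ordered basis
`w₁, …, w_r`, `ω = ι w₁ ⋯ ι w_r`, and let `λ` be the canonical linear isomorphism
`Cl(q) ≅ Λ•V` (existing since `2` is invertible) followed by the projection to the top
exterior power `ΛⁿV`. Then `Φ(ξ)(y) = λ(ξ·y)` defines a surjection of `Cl(q)` onto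
`Hom_k(Cl(q)·ω, ΛⁿV)` whose kernel is exactly `{ξ : ω·ξ = 0}`; consequently it induces
a linear isomorphism `Cl(q)/{ξ : ω·ξ = 0} ≅ Hom_k(Cl(q)·ω, ΛⁿV)`. -/
theorem clifford_left_ideal_duality
    {k V : Type*} [Field k] [Invertible (2 : k)]
    [AddCommGroup V] [Module k V] [FiniteDimensional k V]
    (Q : QuadraticForm k V) (W : Submodule k V)
    (hiso : ∀ u ∈ W, Q u = 0)
    (r : ℕ) (w : Fin r → V)
    (hli : LinearIndependent k w)
    (hspan : Submodule.span k (Set.range w) = W)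
    (ω : CliffordAlgebra Q)
    (hω : ω = (List.ofFn fun i => ι Q (w i)).prod)
    (L : Submodule k (CliffordAlgebra Q))
    (hL : L = Submodule.span k {y | ∃ x : CliffordAlgebra Q, y = x * ω}) :
    (∀ g : ↥L →ₗ[k] ↥(⋀[k]^(Module.finrank k V) V),
      ∃ ξ : CliffordAlgebra Q, ∀ y : ↥L,
        (DirectSum.decompose (fun i : ℕ => ⋀[k]^i V)
            (equivExterior Q (ξ * (y : CliffordAlgebra Q)))) (Module.finrank k V) = g y) ∧
    (∀ ξ : CliffordAlgebra Q,
      (∀ y : ↥L,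
        (DirectSum.decompose (fun i : ℕ => ⋀[k]^i V)
            (equivExterior Q (ξ * (y : CliffordAlgebra Q)))) (Module.finrank k V) = 0) ↔
      ω * ξ = 0) ∧
    Nonempty ((CliffordAlgebra Q ⧸ LinearMap.ker (LinearMap.mulLeft k ω)) ≃ₗ[k]
      (↥L →ₗ[k] ↥(⋀[k]^(Module.finrank k V) V))) := by
  have hω' : ω = ((List.ofFn w).map (ι Q)).prod := by
    rw [hω, List.map_ofFn]
    rfl
  have hmem : ∀ x : CliffordAlgebra Q, x * ω ∈ L := fun x => by
    rw [hL]; exact Submodule.subset_span ⟨x, rfl⟩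
  have hLform : ∀ y ∈ L, ∃ x, y = x * ω := by
    intro y hy
    have hle : L ≤ LinearMap.range (LinearMap.mulRight k ω) := by
      rw [hL, Submodule.span_le]
      rintro _ ⟨x, rfl⟩
      exact ⟨x, rfl⟩
    obtain ⟨x, hx⟩ := hle hy
    exact ⟨x, hx.symm⟩
  let Φ : CliffordAlgebra Q →ₗ[k] (↥L →ₗ[k] ↥(⋀[k]^(Module.finrank k V) V)) :=
    (CliffDual.phi Q).domRestrict₂ L
  have hsurj : ∀ g, ∃ ξ, Φ ξ = g := by
    intro g
    obtain ⟨G, hG⟩ := LinearMap.exists_extend g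
    obtain ⟨ξ, hξ⟩ := CliffDual.phi_surjective Q G
    refine ⟨ξ, ?_⟩
    rw [← hG, ← hξ]
    rfl
  have hker : ∀ ξ, (∀ y : ↥L, Φ ξ y = 0) ↔ ω * ξ = 0 := by
    intro ξ
    rw [hω', ← CliffDual.ker_iff, ← hω']
    constructor
    · intro h x
      exact h ⟨x * ω, hmem x⟩
    · rintro h ⟨y, hy⟩
      obtain ⟨x, rfl⟩ := hLform y hy
      exact h x
  refine ⟨fun g => ?_, hker, ?_⟩
  · obtain ⟨ξ, hξ⟩ := hsurj g
    exact ⟨ξ, fun y => LinearMap.congr_fun hξ y⟩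
  · have hk : LinearMap.ker (LinearMap.mulLeft k ω) = LinearMap.ker Φ := by
      ext ξ
      rw [LinearMap.mem_ker, LinearMap.mem_ker, LinearMap.mulLeft_apply, ← hker]
      exact ⟨fun h => LinearMap.ext h, fun h y => LinearMap.congr_fun h y⟩
    exact CliffDual.gen_quot Φ hsurj _ hk
end

section
/- Suppose dim_k V = 4 and the radical rad(b_q) = {v ∈ V : b_q(v,w) = 0 for all w ∈ V} of the polar form of q has dimension at most 1 (i.e. q has corank at most 1). Then the center of the even Clifford algebra Cl(q)₀ is a 2-dimensional k-vector space. (This is the pointwise computation underlying Lemma 3.1(a): for a quadric surface bundle with simple degeneration, the center of the even Clifford algebra B₀ is locally free of rank 2, so the discriminant cover is a double cover ramified along the first degeneration locus.) -/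
set_option synthInstance.maxHeartbeats 1000000
set_option maxHeartbeats 1000000
open CliffordAlgebra
set_option linter.all false
set_option linter.unusedSimpArgs false
set_option linter.unusedSectionVars false

namespace CEC
variable {k V : Type*} [Field k] [Invertible (2 : k)] [AddCommGroup V] [Module k V]

theorem cl_nontrivial (Q : QuadraticForm k V) : Nontrivial (CliffordAlgebra Q) :=
  (equivExterior Q).toEquiv.nontrivial

section
variable {A : Type*} [Ring A] [Algebra k A]

/-- general even element -/
def ev (e0 e1 e2 e3 : A) (c c01 c02 c03 c12 c13 c23 d : k) : A :=
  c • (1 : A) + c01 • (e0 * e1) + c02 • (e0 * e2) + c03 • (e0 * e3) + c12 • (e1 * e2)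
    + c13 • (e1 * e3) + c23 • (e2 * e3) + d • (e0 * (e1 * (e2 * e3)))

/-- general odd element -/
def od (e0 e1 e2 e3 : A) (c0 c1 c2 c3 c012 c013 c023 c123 : k) : A :=
  c0 • e0 + c1 • e1 + c2 • e2 + c3 • e3 + c012 • (e0 * (e1 * e2)) + c013 • (e0 * (e1 * e3))
    + c023 • (e0 * (e2 * e3)) + c123 • (e1 * (e2 * e3))

structure Rel (e0 e1 e2 e3 : A) (a0 a1 a2 a3 : k) : Prop where
  h00 : e0 * e0 = a0 • (1 : A)
  h11 : e1 * e1 = a1 • (1 : A)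
  h22 : e2 * e2 = a2 • (1 : A)
  h33 : e3 * e3 = a3 • (1 : A)
  h10 : e1 * e0 = -(e0 * e1)
  h20 : e2 * e0 = -(e0 * e2)
  h30 : e3 * e0 = -(e0 * e3)
  h21 : e2 * e1 = -(e1 * e2)
  h31 : e3 * e1 = -(e1 * e3)
  h32 : e3 * e2 = -(e2 * e3)

theorem lft {x y z : A} (h : x * y = -(z)) (w : A) : x * (y * w) = -(z * w) := by
  rw [← mul_assoc, h, neg_mul]
theorem lfts {x : A} {a : k} (h : x * x = a • (1 : A)) (w : A) : x * (x * w) = a • w := by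
  rw [← mul_assoc, h, smul_mul_assoc, one_mul]

variable {e0 e1 e2 e3 : A} {a0 a1 a2 a3 : k}

theorem mul_ev (H : Rel e0 e1 e2 e3 a0 a1 a2 a3) (m0 m1 m2 m3 c c01 c02 c03 c12 c13 c23 d : k) :
    (m0 • e0 + m1 • e1 + m2 • e2 + m3 • e3) * ev e0 e1 e2 e3 c c01 c02 c03 c12 c13 c23 d =
    od e0 e1 e2 e3 (m0 * c - m1 * c01 * a1 - m2 * c02 * a2 - m3 * c03 * a3)
      (m1 * c + m0 * c01 * a0 - m2 * c12 * a2 - m3 * c13 * a3)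
      (m2 * c + m0 * c02 * a0 + m1 * c12 * a1 - m3 * c23 * a3)
      (m3 * c + m0 * c03 * a0 + m1 * c13 * a1 + m2 * c23 * a2)
      (m0 * c12 - m1 * c02 + m2 * c01 - m3 * d * a3) (m0 * c13 - m1 * c03 + m3 * c01 + m2 * d * a2)
      (m0 * c23 - m2 * c03 + m3 * c02 - m1 * d * a1) (m1 * c23 - m2 * c13 + m3 * c12 + m0 * d * a0) := by
  obtain ⟨h00, h11, h22, h33, h10, h20, h30, h21, h31, h32⟩ := H
  simp only [ev, od, mul_add, add_mul, mul_smul_comm, smul_mul_assoc, mul_assoc, mul_one, h00, h11, h22, h33, h10, h20, h30, h21, h31, h32,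
    lft h10, lft h20, lft h30, lft h21, lft h31, lft h32, lfts h00, lfts h11, lfts h22, lfts h33, mul_neg, neg_mul]
  module

theorem mul_od (H : Rel e0 e1 e2 e3 a0 a1 a2 a3) (m0 m1 m2 m3 c0 c1 c2 c3 c012 c013 c023 c123 : k) :
    (m0 • e0 + m1 • e1 + m2 • e2 + m3 • e3) * od e0 e1 e2 e3 c0 c1 c2 c3 c012 c013 c023 c123 =
    ev e0 e1 e2 e3 (m0 * c0 * a0 + m1 * c1 * a1 + m2 * c2 * a2 + m3 * c3 * a3)
      (m0 * c1 - m1 * c0 + m2 * c012 * a2 + m3 * c013 * a3)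
      (m0 * c2 - m2 * c0 - m1 * c012 * a1 + m3 * c023 * a3)
      (m0 * c3 - m3 * c0 - m1 * c013 * a1 - m2 * c023 * a2)
      (m1 * c2 - m2 * c1 + m0 * c012 * a0 + m3 * c123 * a3)
      (m1 * c3 - m3 * c1 + m0 * c013 * a0 - m2 * c123 * a2)
      (m2 * c3 - m3 * c2 + m0 * c023 * a0 + m1 * c123 * a1)
      (m0 * c123 - m1 * c023 + m2 * c013 - m3 * c012) := by
  obtain ⟨h00, h11, h22, h33, h10, h20, h30, h21, h31, h32⟩ := H
  simp only [ev, od, mul_add, add_mul, mul_smul_comm, smul_mul_assoc, mul_assoc, mul_one, h00, h11, h22, h33, h10, h20, h30, h21, h31, h32,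
    lft h10, lft h20, lft h30, lft h21, lft h31, lft h32, lfts h00, lfts h11, lfts h22, lfts h33, mul_neg, neg_mul]
  module

theorem comm (H : Rel e0 e1 e2 e3 a0 a1 a2 a3) (c c01 c02 c03 c12 c13 c23 d : k) :
    let x := ev e0 e1 e2 e3 c c01 c02 c03 c12 c13 c23 d
    (e0 * e1) * x - x * (e0 * e1) =
      ev e0 e1 e2 e3 0 0 (2 * a1 * c12) (2 * a1 * c13) (- 2 * a0 * c02) (-2 * a0 * c03) 0 0 ∧
    (e2 * e3) * x - x * (e2 * e3) =
      ev e0 e1 e2 e3 0 0 (2 * a3 * c03) (-2 * a2 * c02) (2 * a3 * c13) (-2 * a2 * c12) 0 0 ∧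
    (e0 * e2) * x - x * (e0 * e2) =
      ev e0 e1 e2 e3 0 (-2 * a2 * c12) 0 (2 * a2 * c23) (2 * a0 * c01) 0 (-2 * a0 * c03) 0 ∧
    (e1 * e3) * x - x * (e1 * e3) =
      ev e0 e1 e2 e3 0 (2 * a3 * c03) 0 (-2 * a1 * c01) (-2 * a3 * c23) 0 (2 * a1 * c12) 0 := by
  obtain ⟨h00, h11, h22, h33, h10, h20, h30, h21, h31, h32⟩ := H
  intro x
  refine ⟨?_, ?_, ?_, ?_⟩ <;>
  · simp only [x, ev, od, mul_add, add_mul, mul_smul_comm, smul_mul_assoc, mul_assoc, mul_one, one_mul, h00, h11, h22, h33, h10, h20, h30, h21, h31, h32,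
      lft h10, lft h20, lft h30, lft h21, lft h31, lft h32, lfts h00, lfts h11, lfts h22, lfts h33, mul_neg, neg_mul, smul_neg, neg_neg]
    module

theorem omega_anti (H : Rel e0 e1 e2 e3 a0 a1 a2 a3) (m0 m1 m2 m3 : k) :
    (m0 • e0 + m1 • e1 + m2 • e2 + m3 • e3) * (e0 * (e1 * (e2 * e3))) =
    -((e0 * (e1 * (e2 * e3))) * (m0 • e0 + m1 • e1 + m2 • e2 + m3 • e3)) := by
  obtain ⟨h00, h11, h22, h33, h10, h20, h30, h21, h31, h32⟩ := H
  simp only [mul_add, add_mul, mul_smul_comm, smul_mul_assoc, mul_assoc, mul_one, one_mul, h00, h11, h22, h33, h10, h20, h30, h21, h31, h32,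
      lft h10, lft h20, lft h30, lft h21, lft h31, lft h32, lfts h00, lfts h11, lfts h22, lfts h33, mul_neg, neg_mul, smul_neg, neg_neg]
  module
end

theorem ev_eq_zero (Q : QuadraticForm k V) (b : Module.Basis (Fin 4) k V)
    (c c01 c02 c03 c12 c13 c23 d : k)
    (h : ev (ι Q (b 0)) (ι Q (b 1)) (ι Q (b 2)) (ι Q (b 3)) c c01 c02 c03 c12 c13 c23 d = 0) :
    c = 0 ∧ c01 = 0 ∧ c02 = 0 ∧ c03 = 0 ∧ c12 = 0 ∧ c13 = 0 ∧ c23 = 0 ∧ d = 0 := by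
  haveI := cl_nontrivial Q
  have key : ∀ i j : Fin 4, contractLeft (b.coord j) (contractLeft (b.coord i) (ev (ι Q (b 0)) (ι Q (b 1)) (ι Q (b 2)) (ι Q (b 3)) c c01 c02 c03 c12 c13 c23 d)) = 0 := by
    intro i j; rw [h]; simp
  have h1 : d = 0 := by
    have := congrArg (fun z => contractLeft (b.coord 3) (contractLeft (b.coord 2) z)) (key 0 1)
    simpa [ev, contractLeft_ι_mul, contractLeft_ι, Finsupp.single_apply, Algebra.algebraMap_eq_smul_one] using this
  subst h1
  have h01 : c01 = 0 := by
    simpa [ev, contractLeft_ι_mul, contractLeft_ι, Finsupp.single_apply, Algebra.algebraMap_eq_smul_one] using key 0 1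
  have h02 : c02 = 0 := by
    simpa [ev, contractLeft_ι_mul, contractLeft_ι, Finsupp.single_apply, Algebra.algebraMap_eq_smul_one] using key 0 2
  have h03 : c03 = 0 := by
    simpa [ev, contractLeft_ι_mul, contractLeft_ι, Finsupp.single_apply, Algebra.algebraMap_eq_smul_one] using key 0 3
  have h12 : c12 = 0 := by
    simpa [ev, contractLeft_ι_mul, contractLeft_ι, Finsupp.single_apply, Algebra.algebraMap_eq_smul_one] using key 1 2
  have h13 : c13 = 0 := by
    simpa [ev, contractLeft_ι_mul, contractLeft_ι, Finsupp.single_apply, Algebra.algebraMap_eq_smul_one] using key 1 3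
  have h23 : c23 = 0 := by
    simpa [ev, contractLeft_ι_mul, contractLeft_ι, Finsupp.single_apply, Algebra.algebraMap_eq_smul_one] using key 2 3
  subst h01 h02 h03 h12 h13 h23
  simpa [ev] using h

theorem rel (Q : QuadraticForm k V) (b : Module.Basis (Fin 4) k V)
    (hb : ∀ i j, i ≠ j → QuadraticMap.polar Q (b i) (b j) = 0) :
    Rel (ι Q (b 0)) (ι Q (b 1)) (ι Q (b 2)) (ι Q (b 3)) (Q (b 0)) (Q (b 1)) (Q (b 2)) (Q (b 3)) := by
  have h1 : ∀ i, ι Q (b i) * ι Q (b i) = Q (b i) • (1 : CliffordAlgebra Q) := fun i => by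
    rw [ι_sq_scalar, Algebra.algebraMap_eq_smul_one]
  have h2 : ∀ i j, i ≠ j → ι Q (b i) * ι Q (b j) = -(ι Q (b j) * ι Q (b i)) := fun i j hij => by
    rw [eq_neg_iff_add_eq_zero, ι_mul_ι_add_swap, hb i j hij, map_zero]
  constructor <;> first | exact h1 _ | exact h2 _ _ (by decide)

theorem ι_expand (Q : QuadraticForm k V) (b : Module.Basis (Fin 4) k V) (m : V) :
    ∃ m0 m1 m2 m3 : k, ι Q m = m0 • ι Q (b 0) + m1 • ι Q (b 1) + m2 • ι Q (b 2) + m3 • ι Q (b 3) := by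
  refine ⟨b.repr m 0, b.repr m 1, b.repr m 2, b.repr m 3, ?_⟩
  have h := congrArg (ι Q) (b.sum_repr m)
  rw [Fin.sum_univ_four, map_add, map_add, map_add, map_smul, map_smul, map_smul, map_smul] at h
  exact h.symm

theorem even_expand (Q : QuadraticForm k V) (b : Module.Basis (Fin 4) k V)
    (hb : ∀ i j, i ≠ j → QuadraticMap.polar Q (b i) (b j) = 0) (x : CliffordAlgebra Q)
    (hx : x ∈ evenOdd Q 0) : ∃ c c01 c02 c03 c12 c13 c23 d : k,
    x = ev (ι Q (b 0)) (ι Q (b 1)) (ι Q (b 2)) (ι Q (b 3)) c c01 c02 c03 c12 c13 c23 d := by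
  have H := rel Q b hb
  induction x, hx using even_induction with
  | algebraMap r =>
    exact ⟨r, 0, 0, 0, 0, 0, 0, 0, by simp [ev, Algebra.algebraMap_eq_smul_one]⟩
  | add x y hx hy ihx ihy =>
    obtain ⟨c, c01, c02, c03, c12, c13, c23, d, rfl⟩ := ihx
    obtain ⟨c', c01', c02', c03', c12', c13', c23', d', rfl⟩ := ihy
    refine ⟨c + c', c01 + c01', c02 + c02', c03 + c03', c12 + c12', c13 + c13', c23 + c23', d + d', ?_⟩
    simp only [ev]; module
  | ι_mul_ι_mul m₁ m₂ x hx ih =>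
    obtain ⟨c, c01, c02, c03, c12, c13, c23, d, rfl⟩ := ih
    obtain ⟨m0, m1, m2, m3, h⟩ := ι_expand Q b m₁
    obtain ⟨n0, n1, n2, n3, h'⟩ := ι_expand Q b m₂
    rw [h, h', mul_assoc, mul_ev H, mul_od H]
    exact ⟨_, _, _, _, _, _, _, _, rfl⟩

theorem omega_comm (Q : QuadraticForm k V) (b : Module.Basis (Fin 4) k V)
    (hb : ∀ i j, i ≠ j → QuadraticMap.polar Q (b i) (b j) = 0) (x : CliffordAlgebra Q)
    (hx : x ∈ evenOdd Q 0) :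
    x * (ι Q (b 0) * (ι Q (b 1) * (ι Q (b 2) * ι Q (b 3)))) =
      (ι Q (b 0) * (ι Q (b 1) * (ι Q (b 2) * ι Q (b 3)))) * x := by
  have H := rel Q b hb
  have A : ∀ m : V, ι Q m * (ι Q (b 0) * (ι Q (b 1) * (ι Q (b 2) * ι Q (b 3)))) =
      -((ι Q (b 0) * (ι Q (b 1) * (ι Q (b 2) * ι Q (b 3)))) * ι Q m) := by
    intro m
    obtain ⟨m0, m1, m2, m3, h⟩ := ι_expand Q b m
    rw [h, omega_anti H]
  generalize (ι Q (b 0) * (ι Q (b 1) * (ι Q (b 2) * ι Q (b 3)))) = w at A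
  induction x, hx using even_induction with
  | algebraMap r => exact Algebra.commutes r w
  | add x y hx hy ihx ihy => rw [add_mul, mul_add, ihx, ihy]
  | ι_mul_ι_mul m₁ m₂ x hx ih =>
    rw [mul_assoc, ih, ← mul_assoc, mul_assoc (ι Q m₁), A, mul_neg, ← mul_assoc, A]
    simp only [neg_mul, neg_neg, mul_assoc]

theorem exists_basis [FiniteDimensional k V] (Q : QuadraticForm k V)
    (h4 : Module.finrank k V = 4)
    (hcorank : Module.finrank k ↥(LinearMap.ker (QuadraticMap.polarBilin Q)) ≤ 1) :
    ∃ b : Module.Basis (Fin 4) k V, (∀ i j, i ≠ j → QuadraticMap.polar Q (b i) (b j) = 0) ∧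
      ∀ i j, i ≠ j → ¬ (Q (b i) = 0 ∧ Q (b j) = 0) := by
  have hs : LinearMap.IsSymm (QuadraticMap.polarBilin Q) :=
    ⟨fun x y => by simpa using QuadraticMap.polar_comm Q x y⟩
  obtain ⟨v, hv⟩ := LinearMap.BilinForm.exists_orthogonal_basis hs
  let b := v.reindex (finCongr h4)
  have hb : ∀ i j, i ≠ j → QuadraticMap.polar Q (b i) (b j) = 0 := by
    intro i j hij
    have := hv (i := (finCongr h4).symm i) (j := (finCongr h4).symm j) (by simpa using hij)
    simpa [b] using this
  refine ⟨b, hb, ?_⟩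
  rintro i j hij ⟨hi, hj⟩
  have hk : ∀ i, Q (b i) = 0 → b i ∈ LinearMap.ker (QuadraticMap.polarBilin Q) := by
    intro i hi
    rw [LinearMap.mem_ker]
    refine b.ext fun l => ?_
    by_cases hl : i = l
    · subst hl; simp [hi]
    · simpa using hb i l hl
  have hli : LinearIndependent k (![(⟨b i, hk i hi⟩ : LinearMap.ker (QuadraticMap.polarBilin Q)), ⟨b j, hk j hj⟩]) := by
    rw [LinearIndependent.pair_iff]
    intro s t hst
    have h2 := congrArg Subtype.val hst
    simp only [Submodule.coe_add, Submodule.coe_smul, Submodule.coe_zero] at h2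
    have e1 := congrArg (fun z => b.repr z i) h2
    have e2 := congrArg (fun z => b.repr z j) h2
    simp [Finsupp.single_apply, hij, hij.symm] at e1 e2
    exact ⟨e1, e2⟩
  have := hli.fintype_card_le_finrank
  simp at this
  omega

theorem zz {p q r : Prop} (h : ¬ (p ∧ q)) (h1 : p ∨ r) (h2 : q ∨ r) : r := by
  tauto

end CEC

/-- If `dim V = 4` and the radical of the polar form of `q` has dimension
at most `1` (corank at most `1`), then the center of the even Clifford algebra
`Cl(q)₀` is a 2-dimensional `k`-vector space. -/
theorem center_even_clifford_rank_two_of_corank_le_one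
    {k V : Type*} [Field k] [Invertible (2 : k)]
    [AddCommGroup V] [Module k V] [FiniteDimensional k V]
    (Q : QuadraticForm k V)
    (h4 : Module.finrank k V = 4)
    (hcorank : Module.finrank k ↥(LinearMap.ker (QuadraticMap.polarBilin Q)) ≤ 1) :
    Module.finrank k ↥(Subalgebra.center k ↥(even Q)) = 2 := by
  obtain ⟨b, hb, hne⟩ := CEC.exists_basis Q h4 hcorank
  have h20 : (2 : k) ≠ 0 := Invertible.ne_zero 2
  have H := CEC.rel Q b hb
  have hm : ∀ i j, ι Q (b i) * ι Q (b j) ∈ even Q := fun i j => ι_mul_ι_mem_evenOdd_zero Q _ _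
  have hw : ι Q (b 0) * (ι Q (b 1) * (ι Q (b 2) * ι Q (b 3))) ∈ even Q := by
    rw [← mul_assoc]; exact mul_mem (hm 0 1) (hm 2 3)
  let w : even Q := ⟨_, hw⟩
  have hwc : w ∈ Subalgebra.center k (even Q) := by
    rw [Subalgebra.mem_center_iff]
    intro x
    exact Subtype.ext (CEC.omega_comm Q b hb x.1 x.2)
  let wc : Subalgebra.center k (even Q) := ⟨w, hwc⟩
  let f : (k × k) →ₗ[k] Subalgebra.center k (even Q) :=
    (LinearMap.toSpanSingleton k _ 1).coprod (LinearMap.toSpanSingleton k _ wc)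
  have hf : ∀ p : k × k, ((f p : even Q) : CliffordAlgebra Q) =
      CEC.ev (ι Q (b 0)) (ι Q (b 1)) (ι Q (b 2)) (ι Q (b 3)) p.1 0 0 0 0 0 0 p.2 := by
    intro p
    simp [f, CEC.ev, wc, w]
  have hinj : Function.Injective f := by
    rw [injective_iff_map_eq_zero]
    intro p hp
    have h1 := hf p
    rw [hp] at h1
    have h2 := CEC.ev_eq_zero Q b _ _ _ _ _ _ _ _ h1.symm
    exact Prod.ext h2.1 h2.2.2.2.2.2.2.2
  have hsurj : Function.Surjective f := by
    rintro ⟨⟨x, hx⟩, hc⟩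
    rw [Subalgebra.mem_center_iff] at hc
    have hc' : ∀ i j, ι Q (b i) * ι Q (b j) * x - x * (ι Q (b i) * ι Q (b j)) = 0 := fun i j =>
      sub_eq_zero.2 (congrArg Subtype.val (hc ⟨_, hm i j⟩))
    obtain ⟨c, c01, c02, c03, c12, c13, c23, d, rfl⟩ := CEC.even_expand Q b hb x hx
    obtain ⟨k1, k2, k3, k4⟩ := CEC.comm H c c01 c02 c03 c12 c13 c23 d
    obtain ⟨-, -, p12, p13, p02, p03, -, -⟩ :=
      CEC.ev_eq_zero Q b _ _ _ _ _ _ _ _ (k1.symm.trans (hc' 0 1))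
    obtain ⟨-, -, q03, q02, q13, q12, -, -⟩ :=
      CEC.ev_eq_zero Q b _ _ _ _ _ _ _ _ (k2.symm.trans (hc' 2 3))
    obtain ⟨-, -, -, r23, r01, -, -, -⟩ :=
      CEC.ev_eq_zero Q b _ _ _ _ _ _ _ _ (k3.symm.trans (hc' 0 2))
    obtain ⟨-, -, -, s01, s23, -, -, -⟩ :=
      CEC.ev_eq_zero Q b _ _ _ _ _ _ _ _ (k4.symm.trans (hc' 1 3))
    simp only [mul_eq_zero, neg_eq_zero, h20, false_or] at p12 p13 p02 p03 q03 q02 q13 q12 r23 r01 s01 s23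
    have z01 : c01 = 0 := CEC.zz (hne 0 1 (by decide)) r01 s01
    have z02 : c02 = 0 := CEC.zz (hne 0 2 (by decide)) p02 q02
    have z03 : c03 = 0 := CEC.zz (hne 0 3 (by decide)) p03 q03
    have z12 : c12 = 0 := CEC.zz (hne 1 2 (by decide)) p12 q12
    have z13 : c13 = 0 := CEC.zz (hne 1 3 (by decide)) p13 q13
    have z23 : c23 = 0 := CEC.zz (hne 2 3 (by decide)) r23 s23
    subst z01 z02 z03 z12 z13 z23
    exact ⟨(c, d), Subtype.ext (Subtype.ext (hf (c, d)))⟩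
  rw [← (LinearEquiv.ofBijective f ⟨hinj, hsurj⟩).finrank_eq]
  simp
end
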